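/- Noncommutative anomaly of the fuzzy sphere: for every fixed natural number L and every real μ ≠ 0, the difference between the nonplanar and planar one-loop two-point sums converges as α → ∞, and lim_{α→∞} (I^NP(L, α, μ) − I^P(α, μ)) = −2·h(L), where h(L) = ∑_{k=1}^{L} 1/k is the harmonic number. -/

import Mathlib

open Filter

/-- The `L`-th harmonic number `h(L) = ∑_{k=1}^L 1/k`, with `h(0) = 0`. -/
noncomputable def harmonicR (L : ℕ) : ℝ := ∑ k ∈ Finset.range L, 1 / ((k : ℝ) + 1)

/-- The Racah 6j-symbol `{α α L; α α J}` via Racah's single-sum formula.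
Here `(−1)^{2α} = 1` since `α` is an integer, and the sum runs over
`n` with `max(0, L−J) ≤ n ≤ min(L, 2α−J)` (truncated ℕ-subtraction realizes
`max(0, L−J)` as `L − J`, and `J + n − L` realizes `J − L + n ≥ 0`). -/
noncomputable def SixJ (α L J : ℕ) : ℝ :=
  (-1 : ℝ) ^ J *
    ∑ n ∈ Finset.Icc (L - J) (min L (2 * α - J)),
      (-1 : ℝ) ^ n * (Nat.choose L n : ℝ) ^ 2 *
        (((Nat.factorial (2 * α - L) : ℝ) * (Nat.factorial (2 * α + J + n + 1) : ℝ) *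
            (Nat.factorial (2 * α - J) : ℝ) * (Nat.factorial J : ℝ) ^ 2) /
          ((Nat.factorial (2 * α + L + 1) : ℝ) * (Nat.factorial (2 * α + J + 1) : ℝ) *
            (Nat.factorial (2 * α - J - n) : ℝ) * (Nat.factorial (J + n - L) : ℝ) ^ 2))

/-- The planar one-loop sum `I^P(α,μ) = ∑_{J=0}^{2α} (2J+1)/(J(J+1)+μ²)`. -/
noncomputable def IP (α : ℕ) (μ : ℝ) : ℝ :=
  ∑ J ∈ Finset.range (2 * α + 1), (2 * (J : ℝ) + 1) / ((J : ℝ) * ((J : ℝ) + 1) + μ ^ 2)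

/-- The nonplanar one-loop sum
`I^NP(L,α,μ) = ∑_{J=0}^{2α} (−1)^{L+J} (2J+1)(2α+1)/(J(J+1)+μ²) · SixJ(α,L,J)`. -/
noncomputable def INP (L α : ℕ) (μ : ℝ) : ℝ :=
  ∑ J ∈ Finset.range (2 * α + 1),
    (-1 : ℝ) ^ (L + J) * ((2 * (J : ℝ) + 1) * (2 * (α : ℝ) + 1)) /
        ((J : ℝ) * ((J : ℝ) + 1) + μ ^ 2) * SixJ α L J

/-!
Put `M = 2 α + 1`. Racah's formula turns `(-1) ^ (L + J) * M * SixJ α L J` into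
`R (1 / M, J / M) / R (1 / M, 0)`, where `R` is a polynomial in two variables with
`R (0, y) = P_L (1 - 2 y²)` and `P_L` is the Legendre polynomial. Since the weight
`(2 J + 1) / (J (J + 1) + μ²)` is asymptotic to `2 / J`, the Stolz–Cesàro theorem, applied to each
monomial of `R`, shows that the difference of the two sums tends to
`2 ∫₀¹ (P_L (1 - 2 y²) - 1) / y dy = ∫₀¹ (P_L (1 - 2 u) - 1) / u du`.
With `p_L (u) = P_L (1 - 2 u)`, the relation
`(L + 1) (p_{L+1} - p_L) = u (d/du) (p_{L+1} + p_L)` shows that passing from `L` to `L + 1` changes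
this integral by `-2 / (L + 1)`, as `p_{L+1} + p_L` is `2` at `0` and `0` at `1`.
-/

open Finset Polynomial
open scoped Polynomial.Bivariate Topology

theorem tendsto_sum_div_sum_of_tendsto_div {a g : ℕ → ℝ} {l : ℝ} (g_pos : ∀ n, 0 < g n)
    (sum_g : Tendsto (fun n ↦ ∑ i ∈ range n, g i) atTop atTop)
    (h : Tendsto (fun n ↦ a n / g n) atTop (𝓝 l)) :
    Tendsto (fun n ↦ (∑ i ∈ range n, a i) / ∑ i ∈ range n, g i) atTop (𝓝 l) := by
  have error_isLittleO : (fun n ↦ a n - l * g n) =o[atTop] g := by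
    rw [Asymptotics.isLittleO_iff_tendsto fun n hn ↦ absurd hn (g_pos n).ne']
    refine (tendsto_sub_nhds_zero_iff.mpr h).congr fun n ↦ ?_
    rw [sub_div, mul_div_cancel_right₀ _ (g_pos n).ne']
  have sum_error :=
    (error_isLittleO.sum_range (fun n ↦ (g_pos n).le) sum_g).tendsto_div_nhds_zero
  rw [← tendsto_sub_nhds_zero_iff]
  refine sum_error.congr' ?_
  filter_upwards [sum_g.eventually_gt_atTop 0] with n hn
  rw [sum_sub_distrib, ← mul_sum, sub_div, mul_div_cancel_right₀ _ hn.ne']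

theorem tendsto_succ_pow_sub_pow_div_pow (k : ℕ) :
    Tendsto (fun n : ℕ ↦ (((n : ℝ) + 1) ^ (k + 1) - (n : ℝ) ^ (k + 1)) / (n : ℝ) ^ k) atTop
      (𝓝 (k + 1)) := by
  have slope : Tendsto (fun t : ℝ ↦ t⁻¹ * ((1 + t) ^ (k + 1) - 1)) (𝓝[>] 0) (𝓝 (k + 1)) := by
    simpa using (hasDerivAt_pow (k + 1) (1 : ℝ)).tendsto_slope_zero_right
  refine (slope.comp (tendsto_inv_atTop_nhdsGT_zero.comp tendsto_natCast_atTop_atTop)).congr' ?_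
  filter_upwards [eventually_ne_atTop 0] with n hn
  have hn : (n : ℝ) ≠ 0 := Nat.cast_ne_zero.mpr hn
  simp only [Function.comp_apply]
  rw [show 1 + (n : ℝ)⁻¹ = (n + 1) / n by field_simp, div_pow]
  field_simp
  ring

theorem tendsto_sum_mul_div_pow_succ {w : ℕ → ℝ} {c : ℝ}
    (hw : Tendsto (fun J : ℕ ↦ J * w J) atTop (𝓝 c)) (k : ℕ) :
    Tendsto (fun M : ℕ ↦ ∑ J ∈ range M, w J * ((J : ℝ) / M) ^ (k + 1)) atTop
      (𝓝 (c / (k + 1))) := by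
  let g : ℕ → ℝ := fun J ↦ ((J : ℝ) + 1) ^ (k + 1) - (J : ℝ) ^ (k + 1)
  have g_pos (J : ℕ) : 0 < g J :=
    sub_pos.mpr (pow_lt_pow_left₀ (lt_add_one _) J.cast_nonneg k.succ_ne_zero)
  have sum_g (M : ℕ) : ∑ J ∈ range M, g J = (M : ℝ) ^ (k + 1) := by
    simpa [g] using sum_range_sub (fun J : ℕ ↦ (J : ℝ) ^ (k + 1)) M
  have ratio : Tendsto (fun J : ℕ ↦ w J * (J : ℝ) ^ (k + 1) / g J) atTop (𝓝 (c / (k + 1))) := by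
    refine (hw.div (tendsto_succ_pow_sub_pow_div_pow k) (by positivity)).congr fun J ↦ ?_
    have hg : ((J : ℝ) + 1) ^ (k + 1) - (J : ℝ) ^ (k + 1) ≠ 0 := (g_pos J).ne'
    simp only [Pi.div_apply, g]
    field_simp
    ring
  refine (tendsto_sum_div_sum_of_tendsto_div g_pos ?_ ratio).congr fun M ↦ ?_
  · simpa only [sum_g, Function.comp_def] using
      (tendsto_pow_atTop k.succ_ne_zero).comp tendsto_natCast_atTop_atTop
  · simp only [sum_g, sum_div, div_pow, mul_div_assoc]

/-- The integral `∫₀¹ (p(x) - p(0)) / x dx`; the quotient is the polynomial `p.divX`, so no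
singularity at `0` arises. -/
noncomputable def integralDivX (p : ℝ[X]) : ℝ := ∫ x in (0 : ℝ)..1, p.divX.eval x

theorem integralDivX_add (p q : ℝ[X]) :
    integralDivX (p + q) = integralDivX p + integralDivX q := by
  simp only [integralDivX, divX_add, eval_add]
  exact intervalIntegral.integral_add (p.divX.continuous.intervalIntegrable _ _)
    (q.divX.continuous.intervalIntegrable _ _)

-- For `k = 0` both sides vanish, the right-hand one because `a / 0 = 0`.
theorem integralDivX_monomial (k : ℕ) (a : ℝ) : integralDivX (monomial k a) = a / k := by
  rw [integralDivX, ← C_mul_X_pow_eq_monomial, divX_C_mul_X_pow]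
  cases k with
  | zero => simp
  | succ k => simp [div_eq_mul_inv]

theorem integralDivX_expand (n : ℕ) (p : ℝ[X]) :
    integralDivX (expand ℝ n p) = integralDivX p / n := by
  induction p using Polynomial.induction_on' with
  | add p q hp hq => rw [map_add, integralDivX_add, integralDivX_add, hp, hq, add_div]
  | monomial k a =>
    rw [expand_monomial, integralDivX_monomial, integralDivX_monomial, Nat.cast_mul, div_div]

theorem integralDivX_X_mul_derivative (p : ℝ[X]) :
    integralDivX (X * derivative p) = p.eval 1 - p.eval 0 := by
  have divX_eq : (X * derivative p).divX = derivative p := by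
    ext k
    rw [coeff_divX, coeff_X_mul]
  rw [integralDivX, divX_eq]
  exact intervalIntegral.integral_eq_sub_of_hasDerivAt (fun x _ ↦ p.hasDerivAt x)
    ((derivative p).continuous.intervalIntegrable _ _)

theorem tendsto_sum_mul_evalEval_sub {w : ℕ → ℝ} {c : ℝ}
    (hw : Tendsto (fun J : ℕ ↦ J * w J) atTop (𝓝 c)) (P : ℝ[X][Y]) :
    Tendsto (fun M : ℕ ↦ ∑ J ∈ range M,
        w J * (P.evalEval (M : ℝ)⁻¹ ((J : ℝ) / M) - P.evalEval (M : ℝ)⁻¹ 0)) atTop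
      (𝓝 (c * integralDivX (P.map (evalRingHom 0)))) := by
  induction P using Polynomial.induction_on' with
  | add P Q hP hQ =>
    rw [Polynomial.map_add, integralDivX_add, mul_add]
    refine (hP.add hQ).congr fun M ↦ ?_
    rw [← sum_add_distrib]
    refine sum_congr rfl fun J _ ↦ ?_
    rw [evalEval_add, evalEval_add]
    ring
  | monomial k q =>
    have coeff_lim : Tendsto (fun M : ℕ ↦ q.eval (M : ℝ)⁻¹) atTop (𝓝 (q.eval 0)) :=
      (q.continuous.tendsto 0).comp tendsto_inv_atTop_nhds_zero_nat
    rw [map_monomial, coe_evalRingHom, integralDivX_monomial]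
    cases k with
    | zero => simp [evalEval_C]
    | succ k =>
      rw [Nat.cast_succ, mul_div_left_comm]
      refine (coeff_lim.mul (tendsto_sum_mul_div_pow_succ hw k)).congr fun M ↦ ?_
      rw [mul_sum]
      refine sum_congr rfl fun J _ ↦ ?_
      simp only [evalEval, eval_monomial, eval_mul, eval_pow, eval_C, zero_pow k.succ_ne_zero]
      ring

theorem coeff_X_mul_derivative {R : Type*} [Semiring R] (p : R[X]) (k : ℕ) :
    (X * derivative p).coeff k = p.coeff k * k := by
  cases k with
  | zero => simp
  | succ k => rw [coeff_X_mul, coeff_derivative, Nat.cast_succ]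

theorem sub_mul_coeff_shiftedLegendre_succ (L k : ℕ) :
    ((L : ℤ) + 1 - k) * (shiftedLegendre (L + 1)).coeff k =
      (L + 1 + k) * (shiftedLegendre L).coeff k := by
  have upper_succ : ((L : ℤ) + 1 - k) * (L + 1).choose k = (L + 1) * L.choose k := by
    obtain hk | hk := le_or_gt k (L + 1)
    · have h := congrArg (Nat.cast : ℕ → ℤ) (Nat.choose_mul_succ_eq L k)
      push_cast [Nat.cast_sub hk] at h
      linear_combination -h
    · simp [Nat.choose_eq_zero_of_lt hk, Nat.choose_eq_zero_of_lt (Nat.lt_of_succ_lt hk)]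
  have absorption :
      ((L : ℤ) + 1) * (L + 1 + k).choose (L + 1) = (L + 1 + k) * (L + k).choose L := by
    have h := congrArg (Nat.cast : ℕ → ℤ) (Nat.add_one_mul_choose_eq (L + k) L)
    rw [add_right_comm L 1 k]
    push_cast at h
    linear_combination -h
  rw [coeff_shiftedLegendre, coeff_shiftedLegendre]
  linear_combination (-1) ^ k * ((L + 1 + k).choose (L + 1) * upper_succ + L.choose k * absorption)

theorem succ_mul_shiftedLegendre_succ_sub (L : ℕ) :
    ((L : ℤ[X]) + 1) * (shiftedLegendre (L + 1) - shiftedLegendre L) =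
      X * derivative (shiftedLegendre (L + 1) + shiftedLegendre L) := by
  ext k
  rw [← Nat.cast_succ, coeff_natCast_mul, coeff_X_mul_derivative, coeff_sub, coeff_add]
  push_cast
  linear_combination sub_mul_coeff_shiftedLegendre_succ L k

theorem shiftedLegendre_map_eval_zero {R : Type*} [Ring R] (L : ℕ) :
    ((shiftedLegendre L).map (Int.castRingHom R)).eval 0 = 1 := by
  rw [← coeff_zero_eq_eval_zero, coeff_map, coeff_shiftedLegendre]
  simp

theorem shiftedLegendre_map_eval_one {R : Type*} [Ring R] (L : ℕ) :
    ((shiftedLegendre L).map (Int.castRingHom R)).eval 1 = (-1) ^ L := by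
  have symm := shiftedLegendre_eval_symm L (1 : R)
  rw [sub_self, aeval_def, aeval_def, ← eval_map, ← eval_map] at symm
  exact symm.trans (by rw [algebraMap_int_eq, shiftedLegendre_map_eval_zero, mul_one])

theorem integralDivX_shiftedLegendre (L : ℕ) :
    integralDivX ((shiftedLegendre L).map (Int.castRingHom ℝ)) = -2 * harmonicR L := by
  induction L with
  | zero => simp [shiftedLegendre, integralDivX, harmonicR]
  | succ L ih =>
    set P := (shiftedLegendre L).map (Int.castRingHom ℝ) with hP
    set Q := (shiftedLegendre (L + 1)).map (Int.castRingHom ℝ) with hQ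
    have inv_mul : C ((L : ℝ) + 1)⁻¹ * ((L : ℝ[X]) + 1) = 1 := by
      rw [← C_eq_natCast, ← C_1, ← C_add, ← C_mul, inv_mul_cancel₀ (by positivity)]
    have recurrence : Q = P + X * derivative (C ((L : ℝ) + 1)⁻¹ * (Q + P)) := by
      have h := congrArg (Polynomial.map (Int.castRingHom ℝ)) (succ_mul_shiftedLegendre_succ_sub L)
      simp only [Polynomial.map_mul, Polynomial.map_add, Polynomial.map_sub, Polynomial.map_natCast,
        Polynomial.map_one, map_X, ← derivative_map, ← hP, ← hQ] at h
      rw [derivative_C_mul]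
      linear_combination C ((L : ℝ) + 1)⁻¹ * h - (Q - P) * inv_mul
    rw [recurrence, integralDivX_add, ih, integralDivX_X_mul_derivative, harmonicR, harmonicR,
      sum_range_succ]
    simp only [eval_mul, eval_C, eval_add, hP, hQ, shiftedLegendre_map_eval_one,
      shiftedLegendre_map_eval_zero]
    ring

theorem shiftedLegendre_eq_sum_choose_sq (L : ℕ) :
    shiftedLegendre L =
      ∑ n ∈ range (L + 1),
        (-1) ^ (L + n) * (L.choose n : ℤ[X]) ^ 2 * ((1 - X) ^ n * X ^ (L - n)) := by
  have factorial_ne : (L.factorial : ℤ[X]) ≠ 0 := Nat.cast_ne_zero.mpr L.factorial_ne_zero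
  apply mul_left_cancel₀ factorial_ne
  rw [factorial_mul_shiftedLegendre_eq, mul_comm, iterate_derivative_mul, mul_sum]
  refine sum_congr rfl fun n hn ↦ ?_
  obtain ⟨m, rfl⟩ := Nat.exists_eq_add_of_le (mem_range_succ_iff.mp hn)
  have derivative_one_sub : derivative^[m] ((1 - X : ℤ[X]) ^ (n + m)) =
      (-1) ^ m * (((n + m).descFactorial m : ℤ[X]) * (1 - X) ^ n) := by
    simpa [iterate_derivative_X_pow_eq_smul] using
      iterate_derivative_comp_one_sub_X ((X : ℤ[X]) ^ (n + m)) m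
  have derivative_X_pow : derivative^[n] ((X : ℤ[X]) ^ (n + m)) =
      ((n + m).descFactorial n : ℤ[X]) * X ^ m := by
    simp [iterate_derivative_X_pow_eq_smul]
  have descFactorial_mul : ((n + m).descFactorial m * (n + m).descFactorial n : ℤ[X]) =
      (n + m).factorial * (n + m).choose n := by
    rw [Nat.descFactorial_eq_factorial_mul_choose, Nat.descFactorial_eq_factorial_mul_choose,
      ← Nat.add_choose_mul_factorial_mul_factorial, Nat.choose_symm_add]
    push_cast
    ring
  have sign : (-1 : ℤ[X]) ^ (n + m + n) = (-1) ^ m := by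
    rw [add_right_comm, ← two_mul, pow_add, pow_mul, neg_one_sq, one_pow, one_mul]
  rw [Nat.add_sub_cancel_left, derivative_one_sub, derivative_X_pow, sign, nsmul_eq_mul]
  linear_combination (-1) ^ m * ((n + m).choose n : ℤ[X]) * (1 - X) ^ n * X ^ m * descFactorial_mul

/-- The falling factorial `y (y - x) ⋯ (y - (k - 1) x)` of step `x`, where `x` is the inner and
`y` the outer variable. At `x = 1 / M`, `y = J / M` it is `J.descFactorial k / M ^ k`. -/
noncomputable def fallingPoly (k : ℕ) : ℝ[X][Y] := ∏ i ∈ range k, (Y - C ((i : ℝ[X]) * X))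

/-- The product `∏_{i=1}^n (1 - (y + i x)²)`, where `x` is the inner and `y` the outer variable.
At `x = 1 / M`, `y = J / M` it is `M ^ (-2 n)` times the ratio
`(M + J + n)! / (M + J)! * (M - 1 - J)! / (M - 1 - J - n)!` of factorials in Racah's formula. -/
noncomputable def oneSubSqPoly (n : ℕ) : ℝ[X][Y] :=
  ∏ i ∈ range n, (1 - (Y + C (((i : ℝ[X]) + 1) * X)) ^ 2)

/-- Racah's sum as a polynomial in `x = 1 / (2 α + 1)` (inner variable) and
`y = J / (2 α + 1)` (outer variable), normalized so as to be `1` at `x = y = 0`. -/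
noncomputable def racahPoly (L : ℕ) : ℝ[X][Y] :=
  ∑ n ∈ range (L + 1),
    (-1) ^ (L + n) * (L.choose n : ℝ[X][Y]) ^ 2 * (oneSubSqPoly n * fallingPoly (L - n) ^ 2)

theorem racahPoly_map_evalRingHom_zero (L : ℕ) :
    (racahPoly L).map (evalRingHom 0) =
      expand ℝ 2 ((shiftedLegendre L).map (Int.castRingHom ℝ)) := by
  simp [racahPoly, oneSubSqPoly, fallingPoly, shiftedLegendre_eq_sum_choose_sq, Polynomial.map_sum,
    Polynomial.map_prod, pow_right_comm]

theorem integralDivX_racahPoly (L : ℕ) :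
    2 * integralDivX ((racahPoly L).map (evalRingHom 0)) = -2 * harmonicR L := by
  rw [racahPoly_map_evalRingHom_zero, integralDivX_expand, integralDivX_shiftedLegendre]
  ring

theorem tendsto_evalEval_racahPoly_zero (L : ℕ) :
    Tendsto (fun M : ℕ ↦ (racahPoly L).evalEval (M : ℝ)⁻¹ 0) atTop (𝓝 1) := by
  have value_zero : (racahPoly L).evalEval 0 0 = 1 := by
    rw [← map_evalRingHom_eval, racahPoly_map_evalRingHom_zero, expand_eval,
      zero_pow two_ne_zero, shiftedLegendre_map_eval_zero]
  have continuous : Continuous fun x : ℝ ↦ (racahPoly L).evalEval x 0 := by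
    simpa only [evalEval, C_0] using ((racahPoly L).eval 0).continuous
  simpa only [value_zero, Function.comp_def] using
    (continuous.tendsto 0).comp tendsto_inv_atTop_nhds_zero_nat

theorem pow_mul_evalEval_fallingPoly {M : ℝ} (hM : M ≠ 0) (J k : ℕ) :
    M ^ k * (fallingPoly k).evalEval M⁻¹ (J / M) = J.descFactorial k := by
  rw [← descPochhammer_eval_eq_descFactorial, descPochhammer_eval_eq_prod_range, fallingPoly,
    evalEval_prod, ← card_range k, ← prod_const, card_range, ← prod_mul_distrib]
  refine prod_congr rfl fun i _ ↦ ?_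
  rw [evalEval_sub, evalEval_X, evalEval_C]
  simp only [eval_mul, eval_natCast, eval_X]
  field_simp

theorem pow_mul_evalEval_oneSubSqPoly {N J : ℕ} (hJ : J ≤ N) (n : ℕ) :
    (((N + 1 : ℕ) : ℝ) ^ 2) ^ n *
        (oneSubSqPoly n).evalEval ((N + 1 : ℕ) : ℝ)⁻¹ (J / (N + 1 : ℕ)) =
      (N + J + 2).ascFactorial n * (N - J).descFactorial n := by
  rw [← descPochhammer_eval_eq_descFactorial, descPochhammer_eval_eq_prod_range,
    Nat.ascFactorial_eq_prod_range, oneSubSqPoly, evalEval_prod, ← card_range n, ← prod_const,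
    card_range, ← prod_mul_distrib, Nat.cast_prod, ← prod_mul_distrib]
  refine prod_congr rfl fun i _ ↦ ?_
  rw [evalEval_sub, evalEval_pow, evalEval_add, evalEval_X, evalEval_C]
  simp only [evalEval_one, eval_mul, eval_add, eval_natCast, eval_one, eval_X]
  have hN : ((N + 1 : ℕ) : ℝ) ≠ 0 := Nat.cast_ne_zero.mpr N.succ_ne_zero
  field_simp
  push_cast [Nat.cast_sub hJ]
  ring

theorem pow_mul_evalEval_racahPoly (L : ℕ) {N J : ℕ} (hJ : J ≤ N) :
    (((N + 1 : ℕ) : ℝ) ^ 2) ^ L *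
        (racahPoly L).evalEval ((N + 1 : ℕ) : ℝ)⁻¹ (J / (N + 1 : ℕ)) =
      ∑ n ∈ range (L + 1), (-1 : ℝ) ^ (L + n) * (L.choose n : ℝ) ^ 2 *
        ((N + J + 2).ascFactorial n * (N - J).descFactorial n *
          (J.descFactorial (L - n) : ℝ) ^ 2) := by
  rw [racahPoly, evalEval_finsetSum, mul_sum]
  refine sum_congr rfl fun n hn ↦ ?_
  obtain ⟨m, rfl⟩ := Nat.exists_eq_add_of_le (mem_range_succ_iff.mp hn)
  rw [← pow_mul_evalEval_oneSubSqPoly hJ,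
    ← pow_mul_evalEval_fallingPoly (Nat.cast_ne_zero.mpr N.succ_ne_zero)]
  simp only [evalEval_mul, evalEval_pow, evalEval_neg, evalEval_one, evalEval_natCast,
    Nat.add_sub_cancel_left]
  ring

theorem pow_mul_evalEval_racahPoly_zero (L N : ℕ) :
    (((N + 1 : ℕ) : ℝ) ^ 2) ^ L * (racahPoly L).evalEval ((N + 1 : ℕ) : ℝ)⁻¹ 0 =
      (N + 2).ascFactorial L * N.descFactorial L := by
  have h := pow_mul_evalEval_racahPoly L N.zero_le
  rw [Nat.cast_zero, zero_div] at h
  rw [h, sum_eq_single_of_mem L (self_mem_range_succ L)]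
  · simp [← two_mul]
  · intro n hn hne
    have : 0 < L - n := Nat.sub_pos_of_lt (lt_of_le_of_ne (mem_range_succ_iff.mp hn) hne)
    simp [Nat.descFactorial_of_lt this]

theorem evalEval_racahPoly_zero_ne_zero {L N : ℕ} (hL : L ≤ N) :
    (racahPoly L).evalEval ((N + 1 : ℕ) : ℝ)⁻¹ 0 ≠ 0 := by
  refine right_ne_zero_of_mul (a := (((N + 1 : ℕ) : ℝ) ^ 2) ^ L) ?_
  rw [pow_mul_evalEval_racahPoly_zero, ← Nat.cast_mul, Nat.cast_ne_zero]
  exact (Nat.mul_pos (Nat.ascFactorial_pos _ _) (Nat.descFactorial_pos.mpr hL)).ne'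

theorem racah_factorial_quotient_eq {N L J n : ℕ} (hL : L ≤ N) (hnL : n ≤ L) (hLJ : L - n ≤ J)
    (hnJ : n ≤ N - J) :
    ((N - L).factorial * (N + J + n + 1).factorial * (N - J).factorial * (J.factorial : ℝ) ^ 2) /
        ((N + L + 1).factorial * (N + J + 1).factorial * (N - J - n).factorial *
          ((J + n - L).factorial : ℝ) ^ 2) =
      (N + J + 2).ascFactorial n * (N - J).descFactorial n * (J.descFactorial (L - n) : ℝ) ^ 2 /
        ((N + 1 : ℕ) * ((N + 2).ascFactorial L * N.descFactorial L)) := by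
  have factorial_ne (k : ℕ) : (k.factorial : ℝ) ≠ 0 := Nat.cast_ne_zero.mpr k.factorial_ne_zero
  have ascFactorial_ne : ((N + 2).ascFactorial L : ℝ) ≠ 0 :=
    Nat.cast_ne_zero.mpr (Nat.ascFactorial_pos _ _).ne'
  have descFactorial_ne : (N.descFactorial L : ℝ) ≠ 0 :=
    Nat.cast_ne_zero.mpr (Nat.descFactorial_pos.mpr hL).ne'
  have succ_ne : ((N + 1 : ℕ) : ℝ) ≠ 0 := Nat.cast_ne_zero.mpr N.succ_ne_zero
  rw [show N + J + n + 1 = N + J + 1 + n by ring, show N + L + 1 = N + 1 + L by ring,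
    show J + n - L = J - (L - n) by lia, ← Nat.factorial_mul_ascFactorial (N + J + 1) n,
    ← Nat.factorial_mul_ascFactorial (N + 1) L, Nat.factorial_succ N,
    ← Nat.factorial_mul_descFactorial hL, ← Nat.factorial_mul_descFactorial hLJ,
    ← Nat.factorial_mul_descFactorial hnJ]
  simp only [Nat.cast_mul]
  field_simp [factorial_ne]

theorem sixJ_eq_sum_div {α L : ℕ} (hL : L ≤ 2 * α) (J : ℕ) :
    SixJ α L J = (-1) ^ J *
      ((∑ n ∈ range (L + 1), (-1 : ℝ) ^ n * (L.choose n : ℝ) ^ 2 *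
        ((2 * α + J + 2).ascFactorial n * (2 * α - J).descFactorial n *
          (J.descFactorial (L - n) : ℝ) ^ 2)) /
        ((2 * α + 1 : ℕ) * ((2 * α + 2).ascFactorial L * (2 * α).descFactorial L))) := by
  have support_subset : Icc (L - J) (min L (2 * α - J)) ⊆ range (L + 1) := fun n hn ↦
    mem_range_succ_iff.mpr ((mem_Icc.mp hn).2.trans (min_le_left _ _))
  rw [SixJ, ← sum_subset support_subset, sum_div]
  · refine congrArg _ (sum_congr rfl fun n hn ↦ ?_)
    rw [mem_Icc, le_min_iff] at hn
    rw [racah_factorial_quotient_eq hL hn.2.1 (by lia) hn.2.2, ← mul_div_assoc]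
  · intro n hn n_notMem
    rw [mem_range] at hn
    rw [mem_Icc, not_and_or, not_le, not_le] at n_notMem
    obtain small | large := n_notMem
    · simp [Nat.descFactorial_of_lt (show J < L - n by lia)]
    · simp [Nat.descFactorial_of_lt (show 2 * α - J < n by lia)]

theorem mul_sixJ_eq_evalEval_div {α L J : ℕ} (hL : L ≤ 2 * α) (hJ : J ≤ 2 * α) :
    (-1) ^ (L + J) * (2 * α + 1 : ℕ) * SixJ α L J =
      (racahPoly L).evalEval ((2 * α + 1 : ℕ) : ℝ)⁻¹ (J / (2 * α + 1 : ℕ)) /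
        (racahPoly L).evalEval ((2 * α + 1 : ℕ) : ℝ)⁻¹ 0 := by
  have succ_ne : ((2 * α + 1 : ℕ) : ℝ) ≠ 0 := Nat.cast_ne_zero.mpr (2 * α).succ_ne_zero
  have sign : (-1 : ℝ) ^ (L + J) * (-1) ^ J = (-1) ^ L := by
    rw [pow_add, mul_assoc, ← mul_pow, neg_one_mul, neg_neg, one_pow, mul_one]
  rw [← mul_div_mul_left _ _ (pow_ne_zero L (pow_ne_zero 2 succ_ne)),
    pow_mul_evalEval_racahPoly_zero, pow_mul_evalEval_racahPoly L hJ, sixJ_eq_sum_div hL,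
    ← div_div, mul_assoc, mul_left_comm _ ((-1 : ℝ) ^ J), ← mul_assoc, sign, ← mul_div_assoc,
    mul_div_cancel₀ _ succ_ne, ← mul_div_assoc, mul_sum]
  simp only [pow_add, mul_assoc]

/-- The propagator `1 / (J (J + 1) + μ²)` of a field of mass `μ` in the mode of angular momentum
`J`, times the multiplicity `2 J + 1` of that mode: the weight common to both one-loop sums. -/
noncomputable def propagatorWeight (μ : ℝ) (J : ℕ) : ℝ :=
  (2 * (J : ℝ) + 1) / ((J : ℝ) * ((J : ℝ) + 1) + μ ^ 2)

theorem tendsto_mul_propagatorWeight (μ : ℝ) :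
    Tendsto (fun J : ℕ ↦ J * propagatorWeight μ J) atTop (𝓝 2) := by
  have inv_lim : Tendsto (fun J : ℕ ↦ (J : ℝ)⁻¹) atTop (𝓝 0) := tendsto_inv_atTop_nhds_zero_nat
  have lim : Tendsto (fun J : ℕ ↦ (2 + (J : ℝ)⁻¹) / (1 + (J : ℝ)⁻¹ + μ ^ 2 * (J : ℝ)⁻¹ ^ 2))
      atTop (𝓝 ((2 + 0) / (1 + 0 + μ ^ 2 * 0 ^ 2))) :=
    (inv_lim.const_add 2).div ((inv_lim.const_add 1).add ((inv_lim.pow 2).const_mul _)) (by simp)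
  rw [show (2 + 0) / (1 + 0 + μ ^ 2 * 0 ^ 2) = 2 by simp] at lim
  refine lim.congr' ?_
  filter_upwards [eventually_ne_atTop 0] with J hJ
  have hJ : (J : ℝ) ≠ 0 := Nat.cast_ne_zero.mpr hJ
  rw [propagatorWeight]
  field_simp

theorem INP_sub_IP {α L : ℕ} (hL : L ≤ 2 * α) (μ : ℝ) :
    INP L α μ - IP α μ =
      (∑ J ∈ range (2 * α + 1), propagatorWeight μ J *
        ((racahPoly L).evalEval ((2 * α + 1 : ℕ) : ℝ)⁻¹ (J / (2 * α + 1 : ℕ)) -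
          (racahPoly L).evalEval ((2 * α + 1 : ℕ) : ℝ)⁻¹ 0)) /
        (racahPoly L).evalEval ((2 * α + 1 : ℕ) : ℝ)⁻¹ 0 := by
  rw [INP, IP, ← sum_sub_distrib, sum_div]
  refine sum_congr rfl fun J hJ ↦ ?_
  rw [mul_div_assoc (propagatorWeight μ J), sub_div,
    div_self (evalEval_racahPoly_zero_ne_zero hL),
    ← mul_sixJ_eq_evalEval_div hL (mem_range_succ_iff.mp hJ), propagatorWeight]
  push_cast
  ring

/-- Noncommutative anomaly of the fuzzy sphere: for every fixed `L ∈ ℕ` and every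
`μ ≠ 0`, the difference between the nonplanar and planar one-loop two-point sums
converges as `α → ∞`, with limit `−2·h(L)`. -/
theorem noncommutative_anomaly (L : ℕ) (μ : ℝ) (hμ : μ ≠ 0) :
    Tendsto (fun α : ℕ => INP L α μ - IP α μ) atTop (nhds (-2 * harmonicR L)) := by
  have index_lim : Tendsto (fun α : ℕ ↦ 2 * α + 1) atTop atTop :=
    tendsto_atTop_mono (fun α ↦ (by lia : α ≤ 2 * α + 1)) tendsto_id
  have quotient_lim :=
    (tendsto_sum_mul_evalEval_sub (tendsto_mul_propagatorWeight μ) (racahPoly L)).div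
      (tendsto_evalEval_racahPoly_zero L) one_ne_zero
  rw [integralDivX_racahPoly, div_one] at quotient_lim
  refine (quotient_lim.comp index_lim).congr' ?_
  filter_upwards [eventually_ge_atTop L] with α hα
  exact (INP_sub_IP (by lia) μ).symm
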